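/- (Basic property of standard representations) Let B be a set of labeled polynomials and let f^[u] be a labeled polynomial with f ≠ 0. If f^[u] has a standard representation w.r.t. B, then there exists g^[v] ∈ B with g ≠ 0, lpp(g) dividing lpp(f), and s(x^t v) ⪯₂ s(u), where x^t = lpp(f)/lpp(g). -/

import Mathlib

/-! The monomial `lpp f` occurs in `f = ∑ pᵢ gᵢ`, hence in some product `pᵢ gᵢ`. The bound
`lpp (pᵢ gᵢ) ⪯ lpp f` then forces `lpp f = lpp (pᵢ gᵢ) = lpp pᵢ + lpp gᵢ` (in exponents), so
`gᵢ` has the required divisibility with `t = lpp pᵢ`. Over a field leading terms do not cancel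
in a product (`add_mem_support_mul`), and the module order restricts to `≺₁` on each component,
so the signature of `x^t vᵢ` occurs in `pᵢ vᵢ` and is therefore bounded by `s(u)`
(`sig_tsmul_le`). -/

open MvPolynomial

noncomputable section

variable {k : Type*} [Field k] {m n : ℕ}

/-- The leading power product of a polynomial, w.r.t. the monomial order `L1`;
`⊥` for the zero polynomial. -/
def lpp (L1 : LinearOrder (Fin n →₀ ℕ)) (f : MvPolynomial (Fin n) k) :
    WithBot (Fin n →₀ ℕ) :=
  @Finset.max _ L1 f.support

/-- The leading coefficient of a polynomial w.r.t. the monomial order `L1`. -/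
def plc (L1 : LinearOrder (Fin n →₀ ℕ)) (f : MvPolynomial (Fin n) k) : k :=
  WithBot.recBotCoe 0 (fun α => MvPolynomial.coeff α f) (lpp L1 f)

/-- The support of a module element `u ∈ R^m`, as a set of module monomials `(i, α)`. -/
def msupport (u : Fin m → MvPolynomial (Fin n) k) : Finset (Fin m × (Fin n →₀ ℕ)) :=
  Finset.univ.biUnion fun i => (u i).support.image fun α => (i, α)

/-- The signature of a module element, w.r.t. the module term order `L2`;
`⊥` for the zero element. -/
def sig (L2 : LinearOrder (Fin m × (Fin n →₀ ℕ))) (u : Fin m → MvPolynomial (Fin n) k) :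
    WithBot (Fin m × (Fin n →₀ ℕ)) :=
  @Finset.max _ L2 (msupport u)

/-- The leading coefficient of a module element (the coefficient at its signature). -/
def mlc (L2 : LinearOrder (Fin m × (Fin n →₀ ℕ))) (u : Fin m → MvPolynomial (Fin n) k) : k :=
  WithBot.recBotCoe 0 (fun p => MvPolynomial.coeff p.2 (u p.1)) (sig L2 u)

/-- The strict order on `WithBot β` induced by a linear order `L` on `β`
(`⊥` smaller than everything). -/
def bslt {β : Type*} (L : LinearOrder β) (a b : WithBot β) : Prop :=
  WithBot.recBotCoe False (fun y => WithBot.recBotCoe True (fun x => L.lt x y) a) b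

/-- The order on `WithBot β` induced by a linear order `L` on `β`. -/
def bsle {β : Type*} (L : LinearOrder β) (a b : WithBot β) : Prop :=
  WithBot.recBotCoe (a = ⊥) (fun y => WithBot.recBotCoe True (fun x => L.le x y) a) b

/-- Multiplication of a module element by the monomial `x^t`. -/
def tsmul (t : Fin n →₀ ℕ) (u : Fin m → MvPolynomial (Fin n) k) :
    Fin m → MvPolynomial (Fin n) k :=
  fun i => monomial t (1 : k) * u i

/-- `u ⬝ f⃗ = u₁ f₁ + ⋯ + u_m f_m`. -/
def dotf (fvec u : Fin m → MvPolynomial (Fin n) k) : MvPolynomial (Fin n) k :=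
  ∑ i, u i * fvec i

/-- The least common multiple of two monomials (componentwise max of exponents). -/
def mlcm (α β : Fin n →₀ ℕ) : Fin n →₀ ℕ :=
  Finsupp.zipWith max (max_self 0) α β

/-- `G` is a labeled Gröbner basis of `(f₁, …, f_m)`. -/
def IsLabeledGB (L1 : LinearOrder (Fin n →₀ ℕ)) (L2 : LinearOrder (Fin m × (Fin n →₀ ℕ)))
    (fvec : Fin m → MvPolynomial (Fin n) k)
    (G : Set (MvPolynomial (Fin n) k × (Fin m → MvPolynomial (Fin n) k))) : Prop :=
  ∀ (f : MvPolynomial (Fin n) k) (u : Fin m → MvPolynomial (Fin n) k),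
    f = dotf fvec u → f ≠ 0 →
      ∃ gv ∈ G, gv.1 ≠ 0 ∧ ∃ t : Fin n →₀ ℕ,
        WithBot.map (fun β => t + β) (lpp L1 gv.1) = lpp L1 f ∧
        bsle L2 (sig L2 (tsmul t gv.2)) (sig L2 u)

/-- `f^[u]` has a standard representation w.r.t. the set `B` of labeled polynomials. -/
def HasStdRep (L1 : LinearOrder (Fin n →₀ ℕ)) (L2 : LinearOrder (Fin m × (Fin n →₀ ℕ)))
    (B : Set (MvPolynomial (Fin n) k × (Fin m → MvPolynomial (Fin n) k)))
    (f : MvPolynomial (Fin n) k) (u : Fin m → MvPolynomial (Fin n) k) : Prop :=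
  ∃ (N : ℕ) (p : Fin N → MvPolynomial (Fin n) k)
      (g : Fin N → MvPolynomial (Fin n) k × (Fin m → MvPolynomial (Fin n) k)),
    (∀ i, g i ∈ B) ∧ f = ∑ i, p i * (g i).1 ∧
    (∀ i, bsle L1 (lpp L1 (p i * (g i).1)) (lpp L1 f)) ∧
    (∀ i, bsle L2 (sig L2 (fun j => p i * (g i).2 j)) (sig L2 u))

/-- The polynomial part of the S-polynomial of the critical pair `(x^tg, gv, x^th, hw)`. -/
def spolyP (L1 : LinearOrder (Fin n →₀ ℕ))
    (gv hw : MvPolynomial (Fin n) k × (Fin m → MvPolynomial (Fin n) k))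
    (tg th : Fin n →₀ ℕ) : MvPolynomial (Fin n) k :=
  monomial tg (1 : k) * gv.1 - C (plc L1 gv.1 / plc L1 hw.1) * (monomial th (1 : k) * hw.1)

/-- The module part of the S-polynomial of the critical pair `(x^tg, gv, x^th, hw)`. -/
def spolyV (L1 : LinearOrder (Fin n →₀ ℕ))
    (gv hw : MvPolynomial (Fin n) k × (Fin m → MvPolynomial (Fin n) k))
    (tg th : Fin n →₀ ℕ) : Fin m → MvPolynomial (Fin n) k :=
  fun j =>
    monomial tg (1 : k) * gv.2 j - C (plc L1 gv.1 / plc L1 hw.1) * (monomial th (1 : k) * hw.2 j)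

/-- `f^[u]` is reducible (in one step, by a one-side-reduction) by the set `G`
of labeled polynomials. -/
def Reducible (L1 : LinearOrder (Fin n →₀ ℕ)) (L2 : LinearOrder (Fin m × (Fin n →₀ ℕ)))
    (G : Set (MvPolynomial (Fin n) k × (Fin m → MvPolynomial (Fin n) k)))
    (f : MvPolynomial (Fin n) k) (u : Fin m → MvPolynomial (Fin n) k) : Prop :=
  f ≠ 0 ∧ ∃ hw ∈ G, hw.1 ≠ 0 ∧ ∃ t : Fin n →₀ ℕ,
    WithBot.map (fun β => t + β) (lpp L1 hw.1) = lpp L1 f ∧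
    bslt L2 (sig L2 (tsmul t hw.2)) (sig L2 u)

/-- `x^t ⬝ fu` is generalized rewritable by the finite set `B` (w.r.t. the strict partial
order `r` on labeled polynomials). -/
def GenRewritable (L2 : LinearOrder (Fin m × (Fin n →₀ ℕ)))
    (B : Finset (MvPolynomial (Fin n) k × (Fin m → MvPolynomial (Fin n) k)))
    (r : (MvPolynomial (Fin n) k × (Fin m → MvPolynomial (Fin n) k)) →
         (MvPolynomial (Fin n) k × (Fin m → MvPolynomial (Fin n) k)) → Prop)
    (t : Fin n →₀ ℕ)
    (fu : MvPolynomial (Fin n) k × (Fin m → MvPolynomial (Fin n) k)) : Prop :=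
  ∃ gv ∈ B, gv.2 ≠ 0 ∧
    (∃ pq qq : Fin m × (Fin n →₀ ℕ), sig L2 gv.2 = ↑pq ∧ sig L2 fu.2 = ↑qq ∧
      pq.1 = qq.1 ∧ ∃ γ : Fin n →₀ ℕ, pq.2 + γ = t + qq.2) ∧
    r gv fu

/-- The position-over-term module order: `(i, α) ≺ (j, β)` iff `i > j`,
or `i = j` and `α ≺₁ β`. -/
def potLT (L1 : LinearOrder (Fin n →₀ ℕ)) (p q : Fin m × (Fin n →₀ ℕ)) : Prop :=
  q.1 < p.1 ∨ (p.1 = q.1 ∧ L1.lt p.2 q.2)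

/-- `p` is the signature of the module element `w` w.r.t. the linear order `lt`
on module monomials. -/
def IsSigWrt (lt : (Fin m × (Fin n →₀ ℕ)) → (Fin m × (Fin n →₀ ℕ)) → Prop)
    (w : Fin m → MvPolynomial (Fin n) k) (p : Fin m × (Fin n →₀ ℕ)) : Prop :=
  p ∈ msupport w ∧ ∀ q ∈ msupport w, q ≠ p → lt q p

end

section

variable {k : Type*} [Field k] {m n : ℕ}

/-- Maximality in the support, unfolded from `lpp`. -/
theorem lpp_eq_coe (L1 : LinearOrder (Fin n →₀ ℕ)) {f : MvPolynomial (Fin n) k}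
    {a : Fin n →₀ ℕ} (h : lpp L1 f = (a : WithBot (Fin n →₀ ℕ))) :
    a ∈ f.support ∧ ∀ b ∈ f.support, L1.le b a :=
  ⟨@Finset.mem_of_max _ L1 _ _ h, fun _ hb => @Finset.le_max_of_eq _ L1 _ _ _ hb h⟩

theorem exists_lpp (L1 : LinearOrder (Fin n →₀ ℕ)) {f : MvPolynomial (Fin n) k}
    (h : f ≠ 0) : ∃ a : Fin n →₀ ℕ, lpp L1 f = (a : WithBot (Fin n →₀ ℕ)) :=
  @Finset.max_of_nonempty _ L1 _ (MvPolynomial.support_nonempty.2 h)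

theorem mem_msupport {u : Fin m → MvPolynomial (Fin n) k} {p : Fin m × (Fin n →₀ ℕ)} :
    p ∈ msupport u ↔ p.2 ∈ (u p.1).support := by
  obtain ⟨i, α⟩ := p
  simp only [msupport, Finset.mem_biUnion, Finset.mem_univ, true_and, Finset.mem_image,
    Prod.mk.injEq]
  constructor
  · rintro ⟨j, β, hβ, rfl, rfl⟩
    exact hβ
  · intro h
    exact ⟨i, α, h, rfl, rfl⟩

theorem add_le_add_of_order (L1 : LinearOrder (Fin n →₀ ℕ))
    (h1add : ∀ a b c : Fin n →₀ ℕ, L1.lt a b → L1.lt (a + c) (b + c))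
    {a b c d : Fin n →₀ ℕ} (hab : L1.le a b) (hcd : L1.le c d) : L1.le (a + c) (b + d) := by
  have mono : ∀ {a b : Fin n →₀ ℕ} (c : Fin n →₀ ℕ), L1.le a b → L1.le (a + c) (b + c) := by
    intro a b c h
    by_cases e : a = b
    · rw [e]
      exact L1.le_refl _
    · exact @le_of_lt _ L1.toPreorder _ _
        (h1add _ _ _ (@lt_of_le_of_ne _ L1.toPartialOrder _ _ h e))
  have h2 := mono b hcd
  rw [add_comm c b, add_comm d b] at h2
  exact L1.le_trans _ _ _ (mono c hab) h2

/-- If `t` and `α` are the leading monomials of `p` and `q`, then the monomial `t + α` occurs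
in `p * q`: by compatibility of the order with addition, `(t, α)` is the only pair of support
elements with that sum, so nothing cancels. -/
theorem add_mem_support_mul (L1 : LinearOrder (Fin n →₀ ℕ))
    (h1add : ∀ a b c : Fin n →₀ ℕ, L1.lt a b → L1.lt (a + c) (b + c))
    {p q : MvPolynomial (Fin n) k} {t α : Fin n →₀ ℕ}
    (ht : t ∈ p.support) (htmax : ∀ b ∈ p.support, L1.le b t)
    (hα : α ∈ q.support) (hαmax : ∀ b ∈ q.support, L1.le b α) :
    t + α ∈ (p * q).support := by
  have key : coeff (t + α) (p * q) = coeff t p * coeff α q := by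
    rw [coeff_mul]
    refine Finset.sum_eq_single (t, α) ?_ ?_
    · rintro ⟨x, y⟩ hxy hne
      by_contra h0
      have hx : x ∈ p.support := mem_support_iff.2 (left_ne_zero_of_mul h0)
      have hy : y ∈ q.support := mem_support_iff.2 (right_ne_zero_of_mul h0)
      have hsum : x + y = t + α := Finset.HasAntidiagonal.mem_antidiagonal.1 hxy
      have hxt : x ≠ t := by
        rintro rfl
        exact hne (by rw [add_left_cancel hsum])
      have hlt : L1.lt (x + y) (t + y) :=
        h1add _ _ _ (@lt_of_le_of_ne _ L1.toPartialOrder _ _ (htmax x hx) hxt)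
      have hle : L1.le (t + y) (t + α) :=
        add_le_add_of_order L1 h1add (L1.le_refl t) (hαmax y hy)
      rw [hsum] at hlt
      exact @lt_irrefl _ L1.toPreorder _ (@lt_of_lt_of_le _ L1.toPreorder _ _ _ hlt hle)
    · intro h
      exact (h (Finset.HasAntidiagonal.mem_antidiagonal.2 rfl)).elim
  rw [mem_support_iff, key]
  exact mul_ne_zero (mem_support_iff.1 ht) (mem_support_iff.1 hα)

/-- If `t` is the leading monomial of `p`, the signature of `x^t v` is attained in `p v`, so
any bound on the signature of `p v` also bounds that of `x^t v`. -/
theorem sig_tsmul_le (L1 : LinearOrder (Fin n →₀ ℕ)) (L2 : LinearOrder (Fin m × (Fin n →₀ ℕ)))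
    (h1add : ∀ a b c : Fin n →₀ ℕ, L1.lt a b → L1.lt (a + c) (b + c))
    (h21 : ∀ (i : Fin m) (α β : Fin n →₀ ℕ), L1.lt α β → L2.lt (i, α) (i, β))
    {p : MvPolynomial (Fin n) k} {t : Fin n →₀ ℕ}
    (ht : t ∈ p.support) (htmax : ∀ b ∈ p.support, L1.le b t)
    (v : Fin m → MvPolynomial (Fin n) k) (s : WithBot (Fin m × (Fin n →₀ ℕ)))
    (hs : bsle L2 (sig L2 (fun j => p * v j)) s) :
    bsle L2 (sig L2 (tsmul t v)) s := by
  have mem_tsmul : ∀ i γ, γ ∈ (tsmul t v i).support ↔ ∃ α ∈ (v i).support, t + α = γ := by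
    intro i γ
    simp only [tsmul, mem_support_iff, coeff_monomial_mul', one_mul]
    constructor
    · intro h
      split_ifs at h with hle
      · exact ⟨γ - t, h, add_tsub_cancel_of_le hle⟩
      · exact absurd rfl h
    · rintro ⟨α, hα, rfl⟩
      simpa using hα
  cases hsig : sig L2 (tsmul t v) with
  | bot => cases s <;> simp [bsle]
  | coe x =>
    obtain ⟨i, γ⟩ := x
    have hmem : (i, γ) ∈ msupport (tsmul t v) := @Finset.mem_of_max _ L2 _ _ hsig
    obtain ⟨α, hα, rfl⟩ := (mem_tsmul i γ).1 (mem_msupport.1 hmem)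
    -- `h21` makes `α` the leading monomial of `v i`: a larger one would beat the signature.
    have hαmax : ∀ β ∈ (v i).support, L1.le β α := by
      intro β hβ
      by_contra hlt
      have hlt' : L1.lt α β := @lt_of_not_ge _ L1 _ _ hlt
      have h1 : L2.lt (i, t + α) (i, t + β) := by
        apply h21
        rw [add_comm t α, add_comm t β]
        exact h1add _ _ _ hlt'
      have h2 : L2.le (i, t + β) (i, t + α) :=
        @Finset.le_max_of_eq _ L2 _ _ _
          (mem_msupport.2 ((mem_tsmul i (t + β)).2 ⟨β, hβ, rfl⟩)) hsig
      exact @lt_irrefl _ L2.toPreorder _ (@lt_of_lt_of_le _ L2.toPreorder _ _ _ h1 h2)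
    have hpv : (i, t + α) ∈ msupport (fun j => p * v j) :=
      mem_msupport.2 (add_mem_support_mul L1 h1add ht htmax hα hαmax)
    obtain ⟨y, hy⟩ := @Finset.max_of_mem _ L2 _ _ hpv
    have hle : L2.le (i, t + α) y := @Finset.le_max_of_eq _ L2 _ _ _ hpv hy
    have hy' : sig L2 (fun j => p * v j) = (y : WithBot _) := hy
    rw [hy'] at hs
    cases s with
    | bot => exact absurd hs WithBot.coe_ne_bot
    | coe z => exact L2.le_trans _ _ _ hle hs

end

/-- **Basic property of standard representations.** If the labeled polynomial `f^[u]`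
(`f ≠ 0`) has a standard representation w.r.t. the set `B` of labeled polynomials, then
there exists `g^[v] ∈ B` with `g ≠ 0`, `lpp(g)` dividing `lpp(f)`, and
`s(x^t v) ⪯₂ s(u)` where `x^t = lpp(f)/lpp(g)`. -/
theorem std_rep_basic_property (k : Type*) [Field k] (n m : ℕ)
    (L1 : LinearOrder (Fin n →₀ ℕ)) (L2 : LinearOrder (Fin m × (Fin n →₀ ℕ)))
    (h1add : ∀ a b c : Fin n →₀ ℕ, L1.lt a b → L1.lt (a + c) (b + c))
    (h1wf : WellFounded L1.lt)
    (h2add : ∀ (p q : Fin m × (Fin n →₀ ℕ)) (γ : Fin n →₀ ℕ),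
      L2.lt p q → L2.lt (p.1, p.2 + γ) (q.1, q.2 + γ))
    (h21 : ∀ (i : Fin m) (α β : Fin n →₀ ℕ), L1.lt α β → L2.lt (i, α) (i, β))
    (fvec : Fin m → MvPolynomial (Fin n) k)
    (B : Set (MvPolynomial (Fin n) k × (Fin m → MvPolynomial (Fin n) k)))
    (hBlabeled : ∀ p ∈ B, p.1 = dotf fvec p.2)
    (f : MvPolynomial (Fin n) k) (u : Fin m → MvPolynomial (Fin n) k)
    (hf : f = dotf fvec u) (hf0 : f ≠ 0)
    (hstd : HasStdRep L1 L2 B f u) :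
    ∃ gv ∈ B, gv.1 ≠ 0 ∧ ∃ t : Fin n →₀ ℕ,
      WithBot.map (fun β => t + β) (lpp L1 gv.1) = lpp L1 f ∧
      bsle L2 (sig L2 (tsmul t gv.2)) (sig L2 u) := by
  obtain ⟨N, p, g, hgB, hsum, hlpp, hsig⟩ := hstd
  obtain ⟨a, ha⟩ := exists_lpp L1 hf0
  have haf := mem_support_iff.1 (lpp_eq_coe L1 ha).1
  obtain ⟨i, hi⟩ : ∃ i, coeff a (p i * (g i).1) ≠ 0 := by
    by_contra! hall
    apply haf
    rw [hsum, coeff_sum]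
    exact Finset.sum_eq_zero fun i _ => hall i
  have hpg : p i * (g i).1 ≠ 0 := by
    intro h
    simp [h] at hi
  have hg0 := right_ne_zero_of_mul hpg
  obtain ⟨t, ht⟩ := exists_lpp L1 (left_ne_zero_of_mul hpg)
  obtain ⟨b, hb⟩ := exists_lpp L1 hg0
  obtain ⟨c, hc⟩ := exists_lpp L1 hpg
  obtain ⟨htm, htmax⟩ := lpp_eq_coe L1 ht
  obtain ⟨hbm, hbmax⟩ := lpp_eq_coe L1 hb
  have hca : L1.le c a := by
    have h := hlpp i
    rw [hc, ha] at h
    exact h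
  have h1 : L1.le (t + b) a := L1.le_trans _ _ _
    ((lpp_eq_coe L1 hc).2 _ (add_mem_support_mul L1 h1add htm htmax hbm hbmax)) hca
  have h2 : L1.le a (t + b) := by
    rw [coeff_mul] at hi
    obtain ⟨⟨x, y⟩, hxy, hne⟩ := Finset.exists_ne_zero_of_sum_ne_zero hi
    rw [← Finset.HasAntidiagonal.mem_antidiagonal.1 hxy]
    exact add_le_add_of_order L1 h1add
      (htmax _ (mem_support_iff.2 (left_ne_zero_of_mul hne)))
      (hbmax _ (mem_support_iff.2 (right_ne_zero_of_mul hne)))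
  refine ⟨g i, hgB i, hg0, t, ?_, sig_tsmul_le L1 L2 h1add h21 htm htmax _ _ (hsig i)⟩
  rw [hb, ha, WithBot.map_coe, L1.le_antisymm _ _ h1 h2]
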